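/- arXiv:1706.06686 — 7 statements merged into one kernel-verified Lean document; each statement's English description precedes it below -/
import Mathlib

section
/- Let F ≤ 0. Then for every λ > 0 the fiber map φ_λ has exactly one critical point t⁺ in (0,∞) (that is, φ_λ'(t⁺) = 0 and φ_λ'(t) ≠ 0 for every t > 0 with t ≠ t⁺); moreover φ_λ''(t⁺) > 0 and t⁺ is the strict global minimum of φ_λ on (0,∞), i.e. φ_λ(s) > φ_λ(t⁺) for all s > 0 with s ≠ t⁺. -/
/-!
On `(0,∞)` the derivative factors as `φ'(t) = t^(q-1) g(t)` with
`g(t) = A t^(p-q) - λB - F t^(γ-q)`. Since `A > 0` and `F ≤ 0`, `g` is strictly increasing on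
`[0,∞)`, with `g(0) = -λB < 0` and `g(T) ≥ 0` at `T = (λB/A)^(1/(p-q))`. Hence `g` has exactly one
zero `t⁺ > 0`, and `φ'` is negative before `t⁺` and positive after it, so that `t⁺` is the strict
global minimum. As `g(t⁺) = 0`, the product rule gives `φ''(t⁺) = (t⁺)^(q-1) g'(t⁺) > 0`.
-/

open Real Filter Topology Set

/-- The fiber map `φ_λ(t) = (A/p) t^p − (λB/q) t^q − (F/γ) t^γ`. -/
noncomputable def phi (p q γ A B F lam : ℝ) : ℝ → ℝ :=
  fun t => A / p * t ^ p - lam * B / q * t ^ q - F / γ * t ^ γ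

/-- The reduced derivative `g(t) = φ'(t) / t^(q-1)` of the fiber map. -/
noncomputable def reducedDeriv (p q γ A B F lam : ℝ) : ℝ → ℝ :=
  fun t => A * t ^ (p - q) - lam * B - F * t ^ (γ - q)

lemma hasDerivAt_phi {p q γ : ℝ} (A B F lam : ℝ) (hp : p ≠ 0) (hq : q ≠ 0) (hγ : γ ≠ 0)
    {t : ℝ} (ht : 0 < t) :
    HasDerivAt (phi p q γ A B F lam) (t ^ (q - 1) * reducedDeriv p q γ A B F lam t) t := by
  have h := (((Real.hasDerivAt_rpow_const (p := p) (Or.inl ht.ne')).const_mul (A / p)).sub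
    ((Real.hasDerivAt_rpow_const (p := q) (Or.inl ht.ne')).const_mul (lam * B / q))).sub
    ((Real.hasDerivAt_rpow_const (p := γ) (Or.inl ht.ne')).const_mul (F / γ))
  refine h.congr_deriv ?_
  have e1 : t ^ (p - 1) = t ^ (q - 1) * t ^ (p - q) := by
    rw [← Real.rpow_add ht]; congr 1; ring
  have e2 : t ^ (γ - 1) = t ^ (q - 1) * t ^ (γ - q) := by
    rw [← Real.rpow_add ht]; congr 1; ring
  rw [e1, e2, reducedDeriv]
  field_simp

lemma reducedDeriv_strictMonoOn {p q γ A F : ℝ} (B lam : ℝ) (hqp : q < p) (hqγ : q < γ)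
    (hA : 0 < A) (hF : F ≤ 0) : StrictMonoOn (reducedDeriv p q γ A B F lam) (Ici 0) := by
  intro x hx y _ hxy
  have h1 := mul_lt_mul_of_pos_left (Real.rpow_lt_rpow hx hxy (sub_pos.2 hqp)) hA
  have h2 := mul_le_mul_of_nonpos_left (Real.rpow_lt_rpow hx hxy (sub_pos.2 hqγ)).le hF
  simp only [reducedDeriv]
  linarith

lemma exists_reducedDeriv_eq_zero {p q γ A B F lam : ℝ} (hqp : q < p) (hqγ : q < γ)
    (hA : 0 < A) (hB : 0 < B) (hF : F ≤ 0) (hlam : 0 < lam) :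
    ∃ t, 0 < t ∧ reducedDeriv p q γ A B F lam t = 0 := by
  have hpq : 0 < p - q := sub_pos.2 hqp
  have hγq : 0 < γ - q := sub_pos.2 hqγ
  have hcont : Continuous (reducedDeriv p q γ A B F lam) :=
    ((continuous_const.mul (Real.continuous_rpow_const hpq.le)).sub continuous_const).sub
      (continuous_const.mul (Real.continuous_rpow_const hγq.le))
  have h0 : reducedDeriv p q γ A B F lam 0 < 0 := by
    simp only [reducedDeriv, Real.zero_rpow hpq.ne', Real.zero_rpow hγq.ne']
    nlinarith [mul_pos hlam hB]
  set T : ℝ := (lam * B / A) ^ (p - q)⁻¹ with hT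
  have hT0 : 0 ≤ T := by positivity
  have hT1 : 0 ≤ reducedDeriv p q γ A B F lam T := by
    have e : T ^ (p - q) = lam * B / A := Real.rpow_inv_rpow (by positivity) hpq.ne'
    have e' : A * (lam * B / A) = lam * B := by field_simp
    have := mul_nonneg (neg_nonneg.2 hF) (Real.rpow_nonneg hT0 (γ - q))
    simp only [reducedDeriv, e, e']
    linarith
  obtain ⟨t, ht, hgt⟩ := intermediate_value_Icc hT0 hcont.continuousOn ⟨h0.le, hT1⟩
  refine ⟨t, ht.1.lt_of_ne ?_, hgt⟩
  rintro rfl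
  exact h0.ne hgt

/-- if `F ≤ 0` then for every `λ > 0` the fiber map has exactly one critical
point `t⁺` in `(0,∞)`, at which the second derivative is positive, and `t⁺` is the strict
global minimum of `φ_λ` on `(0,∞)`. -/
theorem fiber_map_F_nonpos (p q γ A B F lam : ℝ)
    (hq : 1 < q) (hqp : q < p) (hpγ : p < γ)
    (hA : 0 < A) (hB : 0 < B) (hF : F ≤ 0) (hlam : 0 < lam) :
    ∃ tplus : ℝ, 0 < tplus ∧
      deriv (phi p q γ A B F lam) tplus = 0 ∧
      (∀ t : ℝ, 0 < t → t ≠ tplus → deriv (phi p q γ A B F lam) t ≠ 0) ∧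
      0 < deriv (deriv (phi p q γ A B F lam)) tplus ∧
      ∀ s : ℝ, 0 < s → s ≠ tplus →
        phi p q γ A B F lam tplus < phi p q γ A B F lam s := by
  have hp0 : p ≠ 0 := by linarith
  have hq0 : q ≠ 0 := by linarith
  have hγ0 : γ ≠ 0 := by linarith
  have hqγ : q < γ := hqp.trans hpγ
  obtain ⟨τ, hτ, hgτ⟩ := exists_reducedDeriv_eq_zero hqp hqγ hA hB hF hlam
  have hmono := reducedDeriv_strictMonoOn B lam hqp hqγ hA hF
  have hd : ∀ t, 0 < t → HasDerivAt (phi p q γ A B F lam)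
      (t ^ (q - 1) * reducedDeriv p q γ A B F lam t) t :=
    fun t ht => hasDerivAt_phi A B F lam hp0 hq0 hγ0 ht
  have hneg : ∀ t, 0 < t → t < τ → deriv (phi p q γ A B F lam) t < 0 := by
    intro t ht htτ
    rw [(hd t ht).deriv]
    exact mul_neg_of_pos_of_neg (Real.rpow_pos_of_pos ht _)
      (hgτ ▸ hmono (mem_Ici.2 ht.le) (mem_Ici.2 hτ.le) htτ)
  have hpos : ∀ t, τ < t → 0 < deriv (phi p q γ A B F lam) t := by
    intro t htτ
    rw [(hd t (hτ.trans htτ)).deriv]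
    exact mul_pos (Real.rpow_pos_of_pos (hτ.trans htτ) _)
      (hgτ ▸ hmono (mem_Ici.2 hτ.le) (mem_Ici.2 (hτ.trans htτ).le) htτ)
  refine ⟨τ, hτ, ?_, ?_, ?_, ?_⟩
  · rw [(hd τ hτ).deriv, hgτ, mul_zero]
  · intro t ht hne
    rcases hne.lt_or_gt with h | h
    · exact (hneg t ht h).ne
    · exact (hpos t h).ne'
  · have hev : deriv (phi p q γ A B F lam) =ᶠ[𝓝 τ]
        fun t => t ^ (q - 1) * reducedDeriv p q γ A B F lam t := by
      filter_upwards [Ioi_mem_nhds hτ] with t ht using (hd t ht).deriv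
    have hg : HasDerivAt (reducedDeriv p q γ A B F lam)
        (A * ((p - q) * τ ^ (p - q - 1)) - F * ((γ - q) * τ ^ (γ - q - 1))) τ :=
      (((Real.hasDerivAt_rpow_const (Or.inl hτ.ne')).const_mul A).sub_const (lam * B)).sub
        ((Real.hasDerivAt_rpow_const (Or.inl hτ.ne')).const_mul F)
    have hprod := (Real.hasDerivAt_rpow_const (p := q - 1) (Or.inl hτ.ne')).mul hg
    rw [hev.deriv_eq]
    refine lt_of_lt_of_eq ?_ hprod.deriv.symm
    rw [hgτ, mul_zero, zero_add]
    have h1 : 0 < A * ((p - q) * τ ^ (p - q - 1)) :=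
      mul_pos hA (mul_pos (sub_pos.2 hqp) (Real.rpow_pos_of_pos hτ _))
    have h2 : F * ((γ - q) * τ ^ (γ - q - 1)) ≤ 0 :=
      mul_nonpos_of_nonpos_of_nonneg hF
        (mul_pos (sub_pos.2 hqγ) (Real.rpow_pos_of_pos hτ _)).le
    exact mul_pos (Real.rpow_pos_of_pos hτ _) (by linarith)
  · intro s hs hne
    rcases hne.lt_or_gt with h | h
    · have hanti : StrictAntiOn (phi p q γ A B F lam) (Ioc 0 τ) := by
        refine strictAntiOn_of_deriv_neg (convex_Ioc 0 τ)
          (fun t ht => (hd t ht.1).continuousAt.continuousWithinAt) fun t ht => ?_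
        rw [interior_Ioc] at ht
        exact hneg t ht.1 ht.2
      exact hanti ⟨hs, h.le⟩ ⟨hτ, le_rfl⟩ h
    · have hinc : StrictMonoOn (phi p q γ A B F lam) (Ici τ) := by
        refine strictMonoOn_of_deriv_pos (convex_Ici τ)
          (fun t ht => (hd t (hτ.trans_le ht)).continuousAt.continuousWithinAt) fun t ht => ?_
        rw [interior_Ici] at ht
        exact hpos t ht
      exact hinc (mem_Ici.2 le_rfl) (mem_Ici.2 h.le) h
end

section
/- Let F > 0 and let 0 < λ < Λ(A,B,F). Then the fiber map φ_λ has exactly two critical points 0 < t⁺ < t⁻ in (0,∞), they satisfy φ_λ''(t⁺) > 0 and φ_λ''(t⁻) < 0, and φ_λ is strictly decreasing on (0, t⁺], strictly increasing on [t⁺, t⁻], and strictly decreasing on [t⁻, ∞). -/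
/-!
For `t > 0` one has `φ_λ'(t) = t^(q-1) (h(t) - λB)` with `h(t) = A t^(p-q) - F t^(γ-q)`. The
function `h` vanishes at `0` and at `(A/F)^(1/(γ-p))`, and it is strictly increasing up to
`t₀ = ((p-q)A / ((γ-q)F))^(1/(γ-p))` and strictly decreasing afterwards, with maximal value
`h(t₀) = Λ(A,B,F) B` (`redSlope_peak`). Hence for `0 < λ < Λ` the level `λB` is attained exactly once
on each side of `t₀`, at `t⁺ < t₀ < t⁻`; the position of `λB` relative to `h` gives the sign of
`φ_λ'`, and `φ_λ''(t^±) = t^(q-1) h'(t^±)` has the sign of the derivative of `h`.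
-/

open Real Filter Topology Set

/-- The extremal value `Λ(A,B,F)`. -/
noncomputable def Lam (p q γ A B F : ℝ) : ℝ :=
  (γ - p) / (γ - q) * ((p - q) / (γ - q)) ^ ((p - q) / (γ - p)) *
    A ^ ((γ - q) / (γ - p)) / (B * F ^ ((p - q) / (γ - p)))

/-- The reduced slope `h(t) = A t^a - F t^b`; used with `a = p - q` and `b = γ - q`. -/
noncomputable def redSlope (a b A F : ℝ) : ℝ → ℝ := fun t => A * t ^ a - F * t ^ b

/-- The point `(aA / (bF))^(1/(b-a))` at which the reduced slope is maximal. -/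
noncomputable def peak (a b A F : ℝ) : ℝ := (a * A / (b * F)) ^ (b - a)⁻¹

lemma redSlope_continuous {a b A F : ℝ} (ha : 0 < a) (hab : a < b) : Continuous (redSlope a b A F) := by
  unfold redSlope
  exact (continuous_const.mul (continuous_id.rpow_const fun _ => Or.inr ha.le)).sub
    (continuous_const.mul (continuous_id.rpow_const fun _ => Or.inr (ha.trans hab).le))

lemma redSlope_hasDerivAt (a b A F : ℝ) {t : ℝ} (ht : 0 < t) :
    HasDerivAt (redSlope a b A F) (t ^ (a - 1) * (a * A - b * F * t ^ (b - a))) t := by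
  have h1 := (Real.hasDerivAt_rpow_const (p := a) (Or.inl ht.ne')).const_mul A
  have h2 := (Real.hasDerivAt_rpow_const (p := b) (Or.inl ht.ne')).const_mul F
  have e : t ^ (b - 1) = t ^ (a - 1) * t ^ (b - a) := by
    rw [← Real.rpow_add ht]; congr 1; ring
  refine (h1.sub h2).congr_deriv ?_
  rw [e]; ring

section Peak

variable {a b A F : ℝ}

lemma peak_pos (ha : 0 < a) (hab : a < b) (hA : 0 < A) (hF : 0 < F) : 0 < peak a b A F := by
  have hb := ha.trans hab
  unfold peak; positivity

lemma peak_rpow (ha : 0 < a) (hab : a < b) (hA : 0 < A) (hF : 0 < F) :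
    peak a b A F ^ (b - a) = a * A / (b * F) := by
  have hb := ha.trans hab
  exact Real.rpow_inv_rpow (by positivity) (sub_pos.2 hab).ne'

lemma redSlope_deriv_pos (ha : 0 < a) (hab : a < b) (hA : 0 < A) (hF : 0 < F) {t : ℝ} (ht : 0 < t)
    (h : t < peak a b A F) : 0 < t ^ (a - 1) * (a * A - b * F * t ^ (b - a)) := by
  have hb := ha.trans hab
  have h1 := Real.rpow_lt_rpow ht.le h (sub_pos.2 hab)
  rw [peak_rpow ha hab hA hF, lt_div_iff₀ (by positivity)] at h1
  exact mul_pos (by positivity) (by linarith)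

lemma redSlope_deriv_neg (ha : 0 < a) (hab : a < b) (hA : 0 < A) (hF : 0 < F) {t : ℝ}
    (h : peak a b A F < t) : t ^ (a - 1) * (a * A - b * F * t ^ (b - a)) < 0 := by
  have hb := ha.trans hab
  have hp := peak_pos ha hab hA hF
  have ht := hp.trans h
  have h1 := Real.rpow_lt_rpow hp.le h (sub_pos.2 hab)
  rw [peak_rpow ha hab hA hF, div_lt_iff₀ (by positivity)] at h1
  exact mul_neg_of_pos_of_neg (by positivity) (by linarith)

lemma redSlope_strictMonoOn (ha : 0 < a) (hab : a < b) (hA : 0 < A) (hF : 0 < F) :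
    StrictMonoOn (redSlope a b A F) (Set.Icc 0 (peak a b A F)) := by
  refine strictMonoOn_of_deriv_pos (convex_Icc _ _) (redSlope_continuous ha hab).continuousOn ?_
  intro t ht
  rw [interior_Icc] at ht
  rw [(redSlope_hasDerivAt a b A F ht.1).deriv]
  exact redSlope_deriv_pos ha hab hA hF ht.1 ht.2

lemma redSlope_strictAntiOn (ha : 0 < a) (hab : a < b) (hA : 0 < A) (hF : 0 < F) :
    StrictAntiOn (redSlope a b A F) (Set.Ici (peak a b A F)) := by
  refine strictAntiOn_of_deriv_neg (convex_Ici _) (redSlope_continuous ha hab).continuousOn ?_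
  intro t ht
  rw [interior_Ici] at ht
  rw [(redSlope_hasDerivAt a b A F ((peak_pos ha hab hA hF).trans ht)).deriv]
  exact redSlope_deriv_neg ha hab hA hF ht

lemma redSlope_peak (ha : 0 < a) (hab : a < b) (hA : 0 < A) (hF : 0 < F) :
    redSlope a b A F (peak a b A F) =
      (b - a) / b * (a / b) ^ (a / (b - a)) * A ^ (b / (b - a)) / F ^ (a / (b - a)) := by
  have hb := ha.trans hab
  have hba : 0 < b - a := sub_pos.2 hab
  have hp := peak_pos ha hab hA hF
  have e1 : peak a b A F ^ b = peak a b A F ^ a * (a * A / (b * F)) := by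
    rw [← peak_rpow ha hab hA hF, ← Real.rpow_add hp]; congr 1; ring
  have e2 : peak a b A F ^ a =
      (a / b) ^ (a / (b - a)) * A ^ (a / (b - a)) / F ^ (a / (b - a)) := by
    unfold peak
    rw [← Real.rpow_mul (by positivity), ← Real.mul_rpow (by positivity) (by positivity),
      ← Real.div_rpow (by positivity) (by positivity)]
    congr 1
    · field_simp
    · field_simp
  have e3 : A ^ (b / (b - a)) = A ^ (a / (b - a)) * A := by
    nth_rewrite 3 [← Real.rpow_one A]
    rw [← Real.rpow_add hA]; congr 1; field_simp; ring
  unfold redSlope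
  rw [e1, e2, e3]
  field_simp

/-- Every level strictly between `0` and the maximal slope is attained exactly once on each side
of the peak within `(0, ∞)`, and there the slope exceeds it precisely in between. -/
lemma redSlope_level (ha : 0 < a) (hab : a < b) (hA : 0 < A) (hF : 0 < F) {c : ℝ} (hc : 0 < c)
    (hlt : c < redSlope a b A F (peak a b A F)) :
    ∃ s u : ℝ, 0 < s ∧ s < peak a b A F ∧ peak a b A F < u ∧
      redSlope a b A F s = c ∧ redSlope a b A F u = c ∧
      (∀ t, 0 < t → t < s → redSlope a b A F t < c) ∧
      (∀ t, s < t → t < u → c < redSlope a b A F t) ∧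
      (∀ t, u < t → redSlope a b A F t < c) := by
  have hb := ha.trans hab
  have hba : 0 < b - a := sub_pos.2 hab
  have hp := peak_pos ha hab hA hF
  have hmono := redSlope_strictMonoOn ha hab hA hF
  have hanti := redSlope_strictAntiOn ha hab hA hF
  have hcont := redSlope_continuous (A := A) (F := F) ha hab
  have h0 : redSlope a b A F 0 = 0 := by
    simp [redSlope, Real.zero_rpow ha.ne', Real.zero_rpow hb.ne']
  obtain ⟨s, hs, hsc⟩ := intermediate_value_Ioo hp.le hcont.continuousOn
    (show c ∈ Set.Ioo (redSlope a b A F 0) (redSlope a b A F (peak a b A F)) from ⟨by rwa [h0], hlt⟩)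
  -- The second zero of `h` bounds the search for the right-hand solution.
  set T : ℝ := (A / F) ^ (b - a)⁻¹ with hT
  have hTpos : 0 < T := by positivity
  have hT0 : redSlope a b A F T = 0 := by
    have e : T ^ b = T ^ a * (A / F) := by
      rw [← Real.rpow_inv_rpow (show 0 ≤ A / F by positivity) hba.ne', ← hT,
        ← Real.rpow_add hTpos]
      congr 1; ring
    unfold redSlope
    rw [e]; field_simp; ring
  have hpT : peak a b A F ≤ T := by
    refine Real.rpow_le_rpow (by positivity) ?_ (by positivity)
    rw [div_le_div_iff₀ (by positivity) hF]
    nlinarith [mul_pos hA hF]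
  obtain ⟨u, hu, huc⟩ := intermediate_value_Ioo' hpT hcont.continuousOn
    (show c ∈ Set.Ioo (redSlope a b A F T) (redSlope a b A F (peak a b A F)) from ⟨by rwa [hT0], hlt⟩)
  refine ⟨s, u, hs.1, hs.2, hu.1, hsc, huc, ?_, ?_, ?_⟩
  · intro t ht hts
    rw [← hsc]
    exact hmono ⟨ht.le, (hts.trans hs.2).le⟩ ⟨hs.1.le, hs.2.le⟩ hts
  · intro t hst htu
    rcases le_total t (peak a b A F) with h | h
    · rw [← hsc]
      exact hmono ⟨hs.1.le, hs.2.le⟩ ⟨(hs.1.trans hst).le, h⟩ hst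
    · rw [← huc]
      exact hanti h hu.1.le htu
  · intro t hut
    rw [← huc]
    exact hanti hu.1.le (hu.1.trans hut).le hut

end Peak

lemma phi_hasDerivAt {p q γ : ℝ} (A B F lam : ℝ) (hp : p ≠ 0) (hq : q ≠ 0) (hγ : γ ≠ 0) {t : ℝ}
    (ht : 0 < t) :
    HasDerivAt (phi p q γ A B F lam)
      (t ^ (q - 1) * (redSlope (p - q) (γ - q) A F t - lam * B)) t := by
  have h1 := (Real.hasDerivAt_rpow_const (p := p) (Or.inl ht.ne')).const_mul (A / p)
  have h2 := (Real.hasDerivAt_rpow_const (p := q) (Or.inl ht.ne')).const_mul (lam * B / q)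
  have h3 := (Real.hasDerivAt_rpow_const (p := γ) (Or.inl ht.ne')).const_mul (F / γ)
  have e1 : t ^ (p - 1) = t ^ (q - 1) * t ^ (p - q) := by
    rw [← Real.rpow_add ht]; congr 1; ring
  have e2 : t ^ (γ - 1) = t ^ (q - 1) * t ^ (γ - q) := by
    rw [← Real.rpow_add ht]; congr 1; ring
  refine ((h1.sub h2).sub h3).congr_deriv ?_
  unfold redSlope
  rw [e1, e2]; field_simp; ring

/-- At a critical point the term differentiating `t^(q-1)` drops out of the second derivative of `φ_λ`. -/
lemma phi_deriv_deriv {p q γ A B F lam : ℝ} (hp : p ≠ 0) (hq : q ≠ 0) (hγ : γ ≠ 0) {t : ℝ}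
    (ht : 0 < t) (hc : redSlope (p - q) (γ - q) A F t = lam * B) :
    deriv (deriv (phi p q γ A B F lam)) t =
      t ^ (q - 1) * (t ^ (p - q - 1) *
        ((p - q) * A - (γ - q) * F * t ^ (γ - q - (p - q)))) := by
  have he : deriv (phi p q γ A B F lam) =ᶠ[𝓝 t]
      fun t => t ^ (q - 1) * (redSlope (p - q) (γ - q) A F t - lam * B) := by
    filter_upwards [Ioi_mem_nhds ht] with x hx
    exact (phi_hasDerivAt A B F lam hp hq hγ hx).deriv
  rw [he.deriv_eq]
  have h1 := Real.hasDerivAt_rpow_const (p := q - 1) (Or.inl ht.ne')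
  have h2 := (redSlope_hasDerivAt (p - q) (γ - q) A F ht).sub_const (lam * B)
  rw [(h1.fun_mul h2).deriv, hc]
  ring

/-- for `F > 0` and `0 < λ < Λ(A,B,F)` the fiber map has exactly two critical
points `0 < t⁺ < t⁻`, with `φ_λ''(t⁺) > 0`, `φ_λ''(t⁻) < 0`, and `φ_λ` strictly decreasing
on `(0,t⁺]`, strictly increasing on `[t⁺,t⁻]`, strictly decreasing on `[t⁻,∞)`. -/
theorem fiber_map_F_pos_lam_lt (p q γ A B F lam : ℝ)
    (hq : 1 < q) (hqp : q < p) (hpγ : p < γ)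
    (hA : 0 < A) (hB : 0 < B) (hF : 0 < F)
    (hlam : 0 < lam) (hlt : lam < Lam p q γ A B F) :
    ∃ tplus tminus : ℝ, 0 < tplus ∧ tplus < tminus ∧
      deriv (phi p q γ A B F lam) tplus = 0 ∧
      deriv (phi p q γ A B F lam) tminus = 0 ∧
      (∀ t : ℝ, 0 < t → deriv (phi p q γ A B F lam) t = 0 → t = tplus ∨ t = tminus) ∧
      0 < deriv (deriv (phi p q γ A B F lam)) tplus ∧
      deriv (deriv (phi p q γ A B F lam)) tminus < 0 ∧
      StrictAntiOn (phi p q γ A B F lam) (Set.Ioc 0 tplus) ∧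
      StrictMonoOn (phi p q γ A B F lam) (Set.Icc tplus tminus) ∧
      StrictAntiOn (phi p q γ A B F lam) (Set.Ici tminus) := by
  have ha : 0 < p - q := sub_pos.2 hqp
  have hab : p - q < γ - q := by linarith
  have hq0 : 0 < q := by linarith
  have hp0 : 0 < p := by linarith
  have hγ0 : 0 < γ := by linarith
  have hpeak : lam * B < redSlope (p - q) (γ - q) A F (peak (p - q) (γ - q) A F) := by
    rw [redSlope_peak ha hab hA hF, sub_sub_sub_cancel_right]
    have h := mul_lt_mul_of_pos_right hlt hB
    refine h.trans_eq ?_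
    unfold Lam
    have : 0 < F ^ ((p - q) / (γ - p)) := by positivity
    rw [mul_comm B, ← div_div, div_mul_cancel₀ _ hB.ne']
  obtain ⟨s, u, hs, hsp, hpu, hsc, huc, hl, hm, hr⟩ :=
    redSlope_level ha hab hA hF (mul_pos hlam hB) hpeak
  have hsu := hsp.trans hpu
  have hu := hs.trans hsu
  have hd : ∀ t, 0 < t → deriv (phi p q γ A B F lam) t =
      t ^ (q - 1) * (redSlope (p - q) (γ - q) A F t - lam * B) := fun t ht =>
    (phi_hasDerivAt A B F lam hp0.ne' hq0.ne' hγ0.ne' ht).deriv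
  have hneg : ∀ t, 0 < t → redSlope (p - q) (γ - q) A F t < lam * B →
      deriv (phi p q γ A B F lam) t < 0 := fun t ht h => by
    rw [hd t ht]
    exact mul_neg_of_pos_of_neg (by positivity) (by linarith)
  have hpos : ∀ t, 0 < t → lam * B < redSlope (p - q) (γ - q) A F t →
      0 < deriv (phi p q γ A B F lam) t := fun t ht h => by
    rw [hd t ht]
    exact mul_pos (by positivity) (by linarith)
  have hcont : Continuous (phi p q γ A B F lam) := by
    unfold phi
    exact ((continuous_const.mul (continuous_id.rpow_const fun _ => Or.inr hp0.le)).sub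
      (continuous_const.mul (continuous_id.rpow_const fun _ => Or.inr hq0.le))).sub
      (continuous_const.mul (continuous_id.rpow_const fun _ => Or.inr hγ0.le))
  refine ⟨s, u, hs, hsu, ?_, ?_, ?_, ?_, ?_, ?_, ?_, ?_⟩
  · rw [hd s hs, hsc]; ring
  · rw [hd u hu, huc]; ring
  · intro t ht h0
    rcases lt_trichotomy t s with h | h | h
    · exact absurd h0 (hneg t ht (hl t ht h)).ne
    · exact Or.inl h
    · rcases lt_trichotomy t u with h' | h' | h'
      · exact absurd h0 (hpos t ht (hm t h h')).ne'
      · exact Or.inr h'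
      · exact absurd h0 (hneg t ht (hr t h')).ne
  · rw [phi_deriv_deriv hp0.ne' hq0.ne' hγ0.ne' hs hsc]
    exact mul_pos (by positivity) (redSlope_deriv_pos ha hab hA hF hs hsp)
  · rw [phi_deriv_deriv hp0.ne' hq0.ne' hγ0.ne' hu huc]
    exact mul_neg_of_pos_of_neg (by positivity) (redSlope_deriv_neg ha hab hA hF hpu)
  · refine strictAntiOn_of_deriv_neg (convex_Ioc _ _) hcont.continuousOn fun t ht => ?_
    rw [interior_Ioc] at ht
    exact hneg t ht.1 (hl t ht.1 ht.2)
  · refine strictMonoOn_of_deriv_pos (convex_Icc _ _) hcont.continuousOn fun t ht => ?_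
    rw [interior_Icc] at ht
    exact hpos t (hs.trans ht.1) (hm t ht.1 ht.2)
  · refine strictAntiOn_of_deriv_neg (convex_Ici _) hcont.continuousOn fun t ht => ?_
    rw [interior_Ici] at ht
    exact hneg t (hu.trans ht) (hr t ht)
end

section
/- Let F > 0. Then the system of two equations in the unknowns (t, λ) ∈ (0,∞) × (0,∞): t^p·A − λ·t^q·B − t^γ·F = 0 and p·t^p·A − λ·q·t^q·B − γ·t^γ·F = 0, has exactly one solution, namely t = T(A,F) = ((p−q)A/((γ−q)F))^{1/(γ−p)} and λ = Λ(A,B,F) = ((γ−p)/(γ−q))·((p−q)/(γ−q))^{(p−q)/(γ−p)}·A^{(γ−q)/(γ−p)}/(B·F^{(p−q)/(γ−p)}). -/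
/-!
With `t^p = t^q · t^(p-q)` and `t^γ = t^p · t^(γ-p)`, subtracting `q` times the first equation from
the second eliminates `λ` and leaves `t^(γ-p) = (p-q)A / ((γ-q)F)`, whose only positive root is
`Tcrit` (`Tcrit_rpow_sub`). The first equation is linear in `λ`, so `λ` is determined by `t`;
the closed form of `Lam` is identified through `Lam * B = (γ-p)/(γ-q) · A · Tcrit^(p-q)` (`Lam_mul`).
-/

open Real Filter Topology Set

/-- The degenerate critical point `T(A,F)`. -/
noncomputable def Tcrit (p q γ A F : ℝ) : ℝ :=
  ((p - q) * A / ((γ - q) * F)) ^ (1 / (γ - p))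

lemma Tcrit_pos {p q γ A F : ℝ} (hqp : q < p) (hpγ : p < γ) (hA : 0 < A) (hF : 0 < F) :
    0 < Tcrit p q γ A F := by
  have h1 : 0 < p - q := sub_pos.2 hqp
  have h2 : 0 < γ - q := by linarith
  unfold Tcrit
  positivity

lemma Tcrit_rpow_sub {p q γ A F : ℝ} (hqp : q < p) (hpγ : p < γ) (hA : 0 < A) (hF : 0 < F) :
    Tcrit p q γ A F ^ (γ - p) = (p - q) * A / ((γ - q) * F) := by
  have h1 : 0 < p - q := sub_pos.2 hqp
  have h2 : 0 < γ - q := by linarith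
  have h3 : γ - p ≠ 0 := by linarith
  unfold Tcrit
  rw [← Real.rpow_mul (by positivity), one_div_mul_cancel h3, Real.rpow_one]

lemma Lam_mul {p q γ A B F : ℝ} (hqp : q < p) (hpγ : p < γ)
    (hA : 0 < A) (hB : 0 < B) (hF : 0 < F) :
    Lam p q γ A B F * B = (γ - p) / (γ - q) * A * Tcrit p q γ A F ^ (p - q) := by
  have h1 : 0 < p - q := sub_pos.2 hqp
  have h2 : 0 < γ - q := by linarith
  have h3 : 0 < γ - p := by linarith
  have hX : (p - q) * A / ((γ - q) * F) = (p - q) / (γ - q) * A / F := by field_simp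
  have hs : (γ - q) / (γ - p) = 1 + (p - q) / (γ - p) := by field_simp; ring
  have he : 1 / (γ - p) * (p - q) = (p - q) / (γ - p) := by ring
  unfold Lam Tcrit
  rw [← Real.rpow_mul (by positivity), he, hX, Real.div_rpow (by positivity) hF.le,
    Real.mul_rpow (by positivity) hA.le, hs, Real.rpow_add hA, Real.rpow_one]
  have hFs : 0 < F ^ ((p - q) / (γ - p)) := by positivity
  generalize F ^ ((p - q) / (γ - p)) = Fs at *
  generalize A ^ ((p - q) / (γ - p)) = As at *
  generalize ((p - q) / (γ - q)) ^ ((p - q) / (γ - p)) = Cs at *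
  field_simp

/-- for `F > 0` the system
`t^p A − λ t^q B − t^γ F = 0`, `p t^p A − λ q t^q B − γ t^γ F = 0` in
`(t,λ) ∈ (0,∞) × (0,∞)` has exactly one solution, namely `t = T(A,F)`, `λ = Λ(A,B,F)`. -/
theorem degenerate_system_unique_solution (p q γ A B F : ℝ)
    (hq : 1 < q) (hqp : q < p) (hpγ : p < γ)
    (hA : 0 < A) (hB : 0 < B) (hF : 0 < F) :
    (0 < Tcrit p q γ A F) ∧ (0 < Lam p q γ A B F) ∧
    ((Tcrit p q γ A F) ^ p * A - Lam p q γ A B F * (Tcrit p q γ A F) ^ q * B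
      - (Tcrit p q γ A F) ^ γ * F = 0) ∧
    (p * (Tcrit p q γ A F) ^ p * A - Lam p q γ A B F * q * (Tcrit p q γ A F) ^ q * B
      - γ * (Tcrit p q γ A F) ^ γ * F = 0) ∧
    ∀ t lam : ℝ, 0 < t → 0 < lam →
      t ^ p * A - lam * t ^ q * B - t ^ γ * F = 0 →
      p * t ^ p * A - lam * q * t ^ q * B - γ * t ^ γ * F = 0 →
      t = Tcrit p q γ A F ∧ lam = Lam p q γ A B F := by
  have h1 : 0 < p - q := sub_pos.2 hqp
  have h2 : 0 < γ - q := by linarith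
  have h3 : 0 < γ - p := by linarith
  have hT := Tcrit_pos hqp hpγ hA hF
  have hTX := Tcrit_rpow_sub hqp hpγ hA hF
  have hL := Lam_mul hqp hpγ hA hB hF
  have hp : ∀ t : ℝ, 0 < t → t ^ p = t ^ q * t ^ (p - q) := fun t ht => by
    rw [← Real.rpow_add ht]; congr 1; ring
  have hγ : ∀ t : ℝ, 0 < t → t ^ γ = t ^ p * t ^ (γ - p) := fun t ht => by
    rw [← Real.rpow_add ht]; congr 1; ring
  have hL0 : 0 < Lam p q γ A B F := by
    unfold Lam
    positivity
  have hXF : Tcrit p q γ A F ^ (γ - p) * F = (p - q) / (γ - q) * A := by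
    rw [hTX]; field_simp
  have hsum : (γ - p) / (γ - q) + (p - q) / (γ - q) = 1 := by field_simp; ring
  have hwt : q * ((γ - p) / (γ - q)) + γ * ((p - q) / (γ - q)) = p := by field_simp; ring
  have e1 : (Tcrit p q γ A F) ^ p * A - Lam p q γ A B F * (Tcrit p q γ A F) ^ q * B
      - (Tcrit p q γ A F) ^ γ * F = 0 := by
    rw [hγ _ hT, hp _ hT]
    linear_combination (-(Tcrit p q γ A F) ^ q) * hL
      - (Tcrit p q γ A F) ^ q * (Tcrit p q γ A F) ^ (p - q) * hXF
      - (Tcrit p q γ A F) ^ q * (Tcrit p q γ A F) ^ (p - q) * A * hsum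
  refine ⟨hT, hL0, e1, ?_, ?_⟩
  · rw [hγ _ hT, hp _ hT]
    linear_combination (-q * (Tcrit p q γ A F) ^ q) * hL
      - γ * (Tcrit p q γ A F) ^ q * (Tcrit p q γ A F) ^ (p - q) * hXF
      - (Tcrit p q γ A F) ^ q * (Tcrit p q γ A F) ^ (p - q) * A * hwt
  · intro t lam ht _ E1 E2
    have htp : t ^ p ≠ 0 := (Real.rpow_pos_of_pos ht p).ne'
    -- Second equation minus `q` times the first, divided by `t ^ p`.
    have hx : t ^ (γ - p) = Tcrit p q γ A F ^ (γ - p) := by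
      rw [hTX, eq_div_iff (by positivity)]
      rw [hγ t ht] at E1 E2
      apply mul_left_cancel₀ htp
      linear_combination q * E1 - E2
    have htT : t = Tcrit p q γ A F :=
      (Real.rpow_left_inj ht.le hT.le h3.ne').1 hx
    subst htT
    refine ⟨rfl, ?_⟩
    have hne : (Tcrit p q γ A F) ^ q * B ≠ 0 := by positivity
    apply mul_right_cancel₀ hne
    linear_combination e1 - E1
end

section
/- Let F > 0 and, for each λ ∈ (0, Λ(A,B,F)), let t⁺_λ < t⁻_λ denote the two critical points of the fiber map φ_λ in (0,∞). Then the branch λ ↦ t⁻_λ is strictly decreasing and the branch λ ↦ t⁺_λ is strictly increasing on (0, Λ(A,B,F)): if 0 < λ₁ < λ₂ < Λ(A,B,F) then t⁻_{λ₂} < t⁻_{λ₁} and t⁺_{λ₁} < t⁺_{λ₂}. -/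
/-!
For `t > 0`, dividing `φ_λ'(t)` by `t^(q-1)` shows that `t` is critical exactly when
`A t^(p-q) - F t^(γ-q) = λ B`. In the variable `s = t^(p-q)`, which is increasing in `t`, the left
side is `G(s) = A s - F s^r` with `r = (γ-q)/(p-q) > 1`, a strictly concave function. So `G < λ₁ B`
outside the interval with endpoints `(t⁺_{λ₁})^(p-q)` and `(t⁻_{λ₁})^(p-q)`, where `G = λ₁ B`.
Both critical points for `λ₂ > λ₁` have `G = λ₂ B > λ₁ B`, hence lie strictly between
`t⁺_{λ₁}` and `t⁻_{λ₁}`.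
-/

open Real Filter Topology Set

/-- The critical point equation, written in the variable `s = t^(p-q)`. -/
lemma critical_eq {p q γ A B F lam t : ℝ} (hq : 1 < q) (hqp : q < p) (hpγ : p < γ) (ht : 0 < t)
    (h : deriv (phi p q γ A B F lam) t = 0) :
    A * t ^ (p - q) - F * (t ^ (p - q)) ^ ((γ - q) / (p - q)) = lam * B := by
  have hd : HasDerivAt (phi p q γ A B F lam)
      (A / p * (p * t ^ (p - 1)) - lam * B / q * (q * t ^ (q - 1))
        - F / γ * (γ * t ^ (γ - 1))) t :=
    (((hasDerivAt_rpow_const (Or.inl ht.ne')).const_mul _).sub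
      ((hasDerivAt_rpow_const (Or.inl ht.ne')).const_mul _)).sub
      ((hasDerivAt_rpow_const (Or.inl ht.ne')).const_mul _)
  rw [hd.deriv] at h
  have hp0 : p ≠ 0 := by linarith
  have hq0 : q ≠ 0 := by linarith
  have hγ0 : γ ≠ 0 := by linarith
  have e1 : t ^ (p - 1) = t ^ (p - q) * t ^ (q - 1) := by
    rw [← rpow_add ht]; congr 1; ring
  have e2 : t ^ (γ - 1) = t ^ (γ - q) * t ^ (q - 1) := by
    rw [← rpow_add ht]; congr 1; ring
  have e3 : (t ^ (p - q)) ^ ((γ - q) / (p - q)) = t ^ (γ - q) := by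
    rw [← rpow_mul ht.le, mul_div_cancel₀ _ (sub_pos.2 hqp).ne']
  have hpos : 0 < t ^ (q - 1) := rpow_pos_of_pos ht _
  rw [e3]
  apply mul_right_cancel₀ hpos.ne'
  rw [e1, e2] at h
  field_simp at h
  linear_combination h

lemma strictConcaveOn_reduced {A F r : ℝ} (hF : 0 < F) (hr : 1 < r) :
    StrictConcaveOn ℝ (Ici 0) (fun s : ℝ => A * s - F * s ^ r) := by
  refine ⟨convex_Ici 0, fun x hx y hy hxy a b ha hb hab => ?_⟩
  have h := (strictConvexOn_rpow hr).2 hx hy hxy ha hb hab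
  simp only [smul_eq_mul] at h ⊢
  nlinarith [mul_lt_mul_of_pos_left h hF]

/-- A point where a strictly concave function exceeds its common value at `a < b` lies strictly
between `a` and `b`. -/
lemma mem_Ioo_of_strictConcaveOn {G : ℝ → ℝ} {S : Set ℝ} (hG : StrictConcaveOn ℝ S G)
    {a b x c : ℝ} (ha : a ∈ S) (hb : b ∈ S) (hx : x ∈ S) (hab : a < b)
    (hGa : G a = c) (hGb : G b = c) (hGx : c < G x) : x ∈ Ioo a b := by
  constructor
  · by_contra! hxa
    rcases hxa.eq_or_lt with rfl | hxa
    · exact hGx.ne' hGa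
    · have h := hG.lt_on_openSegment hx hb (hxa.trans hab).ne
        (by rw [openSegment_eq_Ioo (hxa.trans hab)]; exact ⟨hxa, hab⟩)
      rw [hGa, hGb, min_eq_right hGx.le] at h
      exact h.false
  · by_contra! hbx
    rcases hbx.eq_or_lt with rfl | hbx
    · exact hGx.ne' hGb
    · have h := hG.lt_on_openSegment ha hx (hab.trans hbx).ne
        (by rw [openSegment_eq_Ioo (hab.trans hbx)]; exact ⟨hab, hbx⟩)
      rw [hGa, hGb, min_eq_left hGx.le] at h
      exact h.false

/-- the branch `λ ↦ t⁻_λ` is strictly decreasing and `λ ↦ t⁺_λ` is strictly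
increasing on `(0, Λ(A,B,F))`, where `t⁺_λ < t⁻_λ` are the two critical points of `φ_λ`. -/
theorem branches_monotone (p q γ A B F : ℝ)
    (hq : 1 < q) (hqp : q < p) (hpγ : p < γ)
    (hA : 0 < A) (hB : 0 < B) (hF : 0 < F)
    (tplus tminus : ℝ → ℝ)
    (hbr : ∀ lam : ℝ, 0 < lam → lam < Lam p q γ A B F →
      0 < tplus lam ∧ tplus lam < tminus lam ∧
      deriv (phi p q γ A B F lam) (tplus lam) = 0 ∧
      deriv (phi p q γ A B F lam) (tminus lam) = 0 ∧
      ∀ t : ℝ, 0 < t → deriv (phi p q γ A B F lam) t = 0 →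
        t = tplus lam ∨ t = tminus lam)
    (lam₁ lam₂ : ℝ) (h1 : 0 < lam₁) (h12 : lam₁ < lam₂) (h2 : lam₂ < Lam p q γ A B F) :
    tminus lam₂ < tminus lam₁ ∧ tplus lam₁ < tplus lam₂ := by
  obtain ⟨hp1, hlt1, hdp1, hdm1, -⟩ := hbr lam₁ h1 (h12.trans h2)
  obtain ⟨hp2, hlt2, hdp2, hdm2, -⟩ := hbr lam₂ (h1.trans h12) h2
  have hm1 := hp1.trans hlt1
  have hm2 := hp2.trans hlt2
  have hpq : 0 < p - q := sub_pos.2 hqp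
  have hr : 1 < (γ - q) / (p - q) := by rw [lt_div_iff₀ hpq]; linarith
  have hG := strictConcaveOn_reduced (A := A) hF hr
  have hc : lam₁ * B < lam₂ * B := mul_lt_mul_of_pos_right h12 hB
  have key : ∀ t, 0 < t → deriv (phi p q γ A B F lam₂) t = 0 →
      t ^ (p - q) ∈ Ioo (tplus lam₁ ^ (p - q)) (tminus lam₁ ^ (p - q)) := fun t ht hdt =>
    mem_Ioo_of_strictConcaveOn hG (rpow_nonneg hp1.le _) (rpow_nonneg hm1.le _)
      (rpow_nonneg ht.le _) (rpow_lt_rpow hp1.le hlt1 hpq)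
      (critical_eq hq hqp hpγ hp1 hdp1) (critical_eq hq hqp hpγ hm1 hdm1)
      (hc.trans_eq (critical_eq hq hqp hpγ ht hdt).symm)
  exact ⟨(rpow_lt_rpow_iff hm2.le hm1.le hpq).1 (key _ hm2 hdm2).2,
    (rpow_lt_rpow_iff hp1.le hp2.le hpq).1 (key _ hp2 hdp2).1⟩
end

section
/- Let a > 0, S > 0, F ∈ ℝ, and suppose F ≤ S·a^γ (a Sobolev-embedding bound) and (p−q)·a^p < (γ−q)·F (the N_λ⁻ inequality). Then a > ((p−q)/((γ−q)·S))^{1/(γ−p)}; in particular, elements of N_λ⁻ are bounded away from zero in norm, uniformly in λ. -/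
/-!
The two hypotheses chain to `(p - q) a^p < (γ - q) S a^γ`. Since `a > 0`, dividing by
`a^p` gives `(p - q) / ((γ - q) S) < a^(γ - p)`, and as `γ > p` the strictly increasing map
`t ↦ t^(1/(γ - p))` on `[0, ∞)` turns this into the claimed lower bound on `a`.
-/

open Real

/-- if `F ≤ S a^γ` and `(p−q) a^p < (γ−q) F` then
`a > ((p−q)/((γ−q)S))^{1/(γ−p)}`: elements of `N_λ⁻` are bounded away from zero in norm,
uniformly in `λ`. -/
theorem nehari_minus_norm_lower_bound (p q γ a S F : ℝ)
    (hq : 1 < q) (hqp : q < p) (hpγ : p < γ)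
    (ha : 0 < a) (hS : 0 < S)
    (hsob : F ≤ S * a ^ γ)
    (hneh : (p - q) * a ^ p < (γ - q) * F) :
    ((p - q) / ((γ - q) * S)) ^ (1 / (γ - p)) < a := by
  have hγq : 0 < γ - q := by linarith
  have hγp : 0 < γ - p := by linarith
  have hap : 0 < a ^ p := rpow_pos_of_pos ha p
  have hsplit : a ^ γ = a ^ (γ - p) * a ^ p := by
    rw [← rpow_add ha, sub_add_cancel]
  -- Chain the two hypotheses and cancel the positive factor `a ^ p`.
  have hcancel : p - q < a ^ (γ - p) * ((γ - q) * S) := by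
    refine lt_of_mul_lt_mul_right ?_ hap.le
    calc (p - q) * a ^ p < (γ - q) * F := hneh
      _ ≤ (γ - q) * (S * a ^ γ) := mul_le_mul_of_nonneg_left hsob hγq.le
      _ = a ^ (γ - p) * ((γ - q) * S) * a ^ p := by rw [hsplit]; ring
  have hbase : (p - q) / ((γ - q) * S) < a ^ (γ - p) :=
    (div_lt_iff₀ (mul_pos hγq hS)).2 hcancel
  have hnonneg : 0 ≤ (p - q) / ((γ - q) * S) :=
    div_nonneg (by linarith) (mul_pos hγq hS).le
  calc ((p - q) / ((γ - q) * S)) ^ (1 / (γ - p))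
      < (a ^ (γ - p)) ^ (1 / (γ - p)) :=
        rpow_lt_rpow hnonneg hbase (one_div_pos.2 hγp)
    _ = a := by rw [← rpow_mul ha.le, mul_one_div_cancel hγp.ne', rpow_one]
end

section
/- Suppose either F ≤ 0, or F > 0 and 0 < λ < Λ(A,B,F), and let t⁺ be the smallest critical point of the fiber map φ_λ in (0,∞). Then φ_λ(t⁺) < 0; consequently the infimum J_λ⁺ of the energy over the corresponding Nehari branch is negative. -/
/-!
For `t > 0` one has `φ_λ'(t) = t^(q-1) (m(t) - λ B)` with `m(t) = A t^(p-q) - F t^(γ-q)`.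
At a critical point, eliminating `λ B` gives
`φ_λ(t) = -A t^p (p-q)/(pq) + F t^γ (γ-q)/(γq)`.
This is clearly negative if `F ≤ 0`. If `F > 0`, then because `p < γ` it is negative as soon as
`F t^(γ-p) (γ-q) ≤ A (p-q)`, that is, as soon as `t ≤ T`, where `T` is the maximum point of `m`.
Now `m(0) = 0 < λ B < Λ B = m(T)`, so `m` takes the value `λ B` somewhere in `(0, T]`;
the smallest critical point therefore lies in `(0, T]`.
-/

open Real Filter Topology Set

lemma deriv_phi_eq {p q γ A B F lam t : ℝ} (hp : p ≠ 0) (hq : q ≠ 0) (hγ : γ ≠ 0) (ht : 0 < t) :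
    deriv (phi p q γ A B F lam) t =
      t ^ (q - 1) * (A * t ^ (p - q) - F * t ^ (γ - q) - lam * B) := by
  have h : HasDerivAt (phi p q γ A B F lam)
      (A / p * (p * t ^ (p - 1)) - lam * B / q * (q * t ^ (q - 1))
        - F / γ * (γ * t ^ (γ - 1))) t :=
    (((Real.hasDerivAt_rpow_const (Or.inl ht.ne')).const_mul _).sub
      ((Real.hasDerivAt_rpow_const (Or.inl ht.ne')).const_mul _)).sub
      ((Real.hasDerivAt_rpow_const (Or.inl ht.ne')).const_mul _)
  have e1 : t ^ (p - 1) = t ^ (q - 1) * t ^ (p - q) := by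
    rw [← Real.rpow_add ht]; ring_nf
  have e2 : t ^ (γ - 1) = t ^ (q - 1) * t ^ (γ - q) := by
    rw [← Real.rpow_add ht]; ring_nf
  rw [h.deriv, e1, e2]
  field_simp
  ring

/-- A critical point not beyond the maximum point of `t ↦ A t^(p-q) - F t^(γ-q)` has a negative
critical value; for `F ≤ 0` the condition `hT` holds at every `t > 0`. -/
lemma phi_neg_of_crit {p q γ A B F lam t : ℝ} (hq : 1 < q) (hqp : q < p) (hpγ : p < γ)
    (hA : 0 < A) (ht : 0 < t)
    (hcrit : A * t ^ (p - q) - F * t ^ (γ - q) - lam * B = 0)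
    (hT : F * t ^ (γ - p) * (γ - q) ≤ A * (p - q)) :
    phi p q γ A B F lam t < 0 := by
  have hp0 : 0 < p := by linarith
  have hq0 : 0 < q := by linarith
  have hγ0 : 0 < γ := by linarith
  have e1 : t ^ p = t ^ q * t ^ (p - q) := by
    rw [← Real.rpow_add ht]; ring_nf
  have e2 : t ^ γ = t ^ q * (t ^ (p - q) * t ^ (γ - p)) := by
    rw [← Real.rpow_add ht, ← Real.rpow_add ht]; ring_nf
  have e3 : t ^ (γ - q) = t ^ (p - q) * t ^ (γ - p) := by
    rw [← Real.rpow_add ht]; ring_nf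
  have hlB : lam * B = A * t ^ (p - q) - F * (t ^ (p - q) * t ^ (γ - p)) := by
    rw [← e3]; linarith
  have key : phi p q γ A B F lam t = t ^ q * t ^ (p - q) / q *
      (F * t ^ (γ - p) * (γ - q) / γ - A * (p - q) / p) := by
    simp only [phi]
    rw [hlB, e1, e2]
    field_simp
    ring
  rw [key]
  have hpos : 0 < A * (p - q) := mul_pos hA (by linarith)
  have h1 : F * t ^ (γ - p) * (γ - q) / γ ≤ A * (p - q) / γ := by gcongr
  have h2 : A * (p - q) / γ < A * (p - q) / p := by gcongr
  exact mul_neg_of_pos_of_neg (by positivity) (by linarith)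

/-- if either `F ≤ 0` and `λ > 0`, or `F > 0` and `0 < λ < Λ(A,B,F)`, and
`t⁺` is the smallest critical point of `φ_λ` in `(0,∞)`, then `φ_λ(t⁺) < 0`. -/
theorem smallest_critical_value_negative (p q γ A B F lam : ℝ)
    (hq : 1 < q) (hqp : q < p) (hpγ : p < γ)
    (hA : 0 < A) (hB : 0 < B)
    (hcase : (F ≤ 0 ∧ 0 < lam) ∨ (0 < F ∧ 0 < lam ∧ lam < Lam p q γ A B F))
    (tplus : ℝ) (htp : 0 < tplus)
    (hcrit : deriv (phi p q γ A B F lam) tplus = 0)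
    (hsmall : ∀ t : ℝ, 0 < t → deriv (phi p q γ A B F lam) t = 0 → tplus ≤ t) :
    phi p q γ A B F lam tplus < 0 := by
  have hp0 : p ≠ 0 := by linarith
  have hq0 : q ≠ 0 := by linarith
  have hγ0 : γ ≠ 0 := by linarith
  have hcrit' : A * tplus ^ (p - q) - F * tplus ^ (γ - q) - lam * B = 0 := by
    rw [deriv_phi_eq hp0 hq0 hγ0 htp] at hcrit
    exact (mul_eq_zero.mp hcrit).resolve_left (Real.rpow_pos_of_pos htp _).ne'
  have hpq : 0 < p - q := by linarith
  have hgq : 0 < γ - q := by linarith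
  have hgp : 0 < γ - p := by linarith
  refine phi_neg_of_crit hq hqp hpγ hA htp hcrit' ?_
  rcases hcase with ⟨hF, -⟩ | ⟨hF, hl, hlL⟩
  · have h1 : F * tplus ^ (γ - p) * (γ - q) ≤ 0 :=
      mul_nonpos_of_nonpos_of_nonneg
        (mul_nonpos_of_nonpos_of_nonneg hF (Real.rpow_nonneg htp.le _)) hgq.le
    exact h1.trans (mul_pos hA hpq).le
  · -- `T` is the maximum point of `m(t) = A t^(p-q) - F t^(γ-q)`, and `m(T) = Λ B`.
    set K : ℝ := (p - q) / (γ - q) * A / F with hK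
    have hK0 : 0 < K := by positivity
    set T : ℝ := K ^ (1 / (γ - p)) with hTdef
    have hT0 : 0 < T := Real.rpow_pos_of_pos hK0 _
    have hTK : T ^ (γ - p) = K := by
      rw [hTdef, ← Real.rpow_mul hK0.le, one_div_mul_cancel hgp.ne', Real.rpow_one]
    have hTe : T ^ (p - q) = K ^ ((p - q) / (γ - p)) := by
      rw [hTdef, ← Real.rpow_mul hK0.le]; ring_nf
    have hmT : A * T ^ (p - q) - F * T ^ (γ - q) = Lam p q γ A B F * B := by
      have e3 : T ^ (γ - q) = T ^ (p - q) * T ^ (γ - p) := by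
        rw [← Real.rpow_add hT0]; ring_nf
      have e4 : A ^ ((γ - q) / (γ - p)) = A * A ^ ((p - q) / (γ - p)) := by
        rw [← Real.rpow_one_add' hA.le (by positivity)]
        congr 1
        field_simp
        ring
      have e5 : K ^ ((p - q) / (γ - p)) = ((p - q) / (γ - q)) ^ ((p - q) / (γ - p)) *
          A ^ ((p - q) / (γ - p)) / F ^ ((p - q) / (γ - p)) := by
        rw [hK, Real.div_rpow (by positivity) hF.le, Real.mul_rpow (by positivity) hA.le]
      have hFe : 0 < F ^ ((p - q) / (γ - p)) := Real.rpow_pos_of_pos hF _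
      rw [e3, hTK, hTe, e5, Lam, e4, hK]
      generalize F ^ ((p - q) / (γ - p)) = x at *
      generalize A ^ ((p - q) / (γ - p)) = y at *
      generalize ((p - q) / (γ - q)) ^ ((p - q) / (γ - p)) = z at *
      field_simp
      ring
    have hcont : ContinuousOn (fun t : ℝ => A * t ^ (p - q) - F * t ^ (γ - q)) (Icc 0 T) :=
      ((continuous_const.mul (Real.continuous_rpow_const hpq.le)).sub
        (continuous_const.mul (Real.continuous_rpow_const hgq.le))).continuousOn
    obtain ⟨s, ⟨hs0, hsT⟩, hs⟩ : lam * B ∈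
        (fun t : ℝ => A * t ^ (p - q) - F * t ^ (γ - q)) '' Icc 0 T := by
      refine intermediate_value_Icc hT0.le hcont ⟨?_, ?_⟩
      · simp only [Real.zero_rpow hpq.ne', Real.zero_rpow hgq.ne', mul_zero, sub_zero]
        positivity
      · simp only [hmT]
        exact (mul_lt_mul_of_pos_right hlL hB).le
    simp only at hs
    have hs0' : 0 < s := by
      rcases hs0.lt_or_eq with h | h
      · exact h
      · rw [← h, Real.zero_rpow hpq.ne', Real.zero_rpow hgq.ne'] at hs
        have := mul_pos hl hB
        linarith
    have hts : tplus ≤ s := hsmall s hs0' (by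
      rw [deriv_phi_eq hp0 hq0 hγ0 hs0', hs, sub_self, mul_zero])
    have hle : tplus ^ (γ - p) ≤ K := by
      rw [← hTK]
      exact Real.rpow_le_rpow htp.le (hts.trans hsT) hgp.le
    calc F * tplus ^ (γ - p) * (γ - q) ≤ F * K * (γ - q) := by gcongr
      _ = A * (p - q) := by rw [hK]; field_simp
end

section
/- For each sufficiently small λ > 0 (any λ > 0 when F ≤ 0, and any λ ∈ (0, Λ(A,B,F)) when F > 0), let t⁺_λ denote the smallest critical point of the fiber map φ_λ in (0,∞). Then lim_{λ→0⁺} t⁺_λ / λ^{1/(p−q)} = (B/A)^{1/(p−q)}. -/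
/-!
For `t > 0`, factoring `t^(q-1)` out of `φ_λ'(t) = 0` gives the equation `G t = λ B` with
`G t = t^(p-q) (A - F t^(γ-p))` (`deriv_phi_eq_zero_iff`). The function `G` is continuous on
`[0, ∞)`, vanishes at `0` and is positive at small positive points, so by the intermediate value
theorem `φ_λ` has critical points arbitrarily close to `0` once `λ` is small; minimality forces
`t⁺_λ → 0`. Then `(t⁺_λ)^(p-q) / λ = B / (A - F (t⁺_λ)^(γ-p)) → B / A`, and raising to the
power `1/(p-q)` gives the limit.
-/

open Real Filter Topology Set

lemma deriv_phi_eq_zero_iff {p q γ A B F lam t : ℝ} (hq : 1 < q) (hqp : q < p) (hpγ : p < γ)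
    (ht : 0 < t) :
    deriv (phi p q γ A B F lam) t = 0 ↔ t ^ (p - q) * (A - F * t ^ (γ - p)) = lam * B := by
  have hp0 : p ≠ 0 := by linarith
  have hq0 : q ≠ 0 := by linarith
  have hγ0 : γ ≠ 0 := by linarith
  have hd : HasDerivAt (phi p q γ A B F lam)
      (A / p * (p * t ^ (p - 1)) - lam * B / q * (q * t ^ (q - 1))
        - F / γ * (γ * t ^ (γ - 1))) t :=
    (((Real.hasDerivAt_rpow_const (Or.inl ht.ne')).const_mul (A / p)).sub
      ((Real.hasDerivAt_rpow_const (Or.inl ht.ne')).const_mul (lam * B / q))).sub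
      ((Real.hasDerivAt_rpow_const (Or.inl ht.ne')).const_mul (F / γ))
  have e1 : t ^ (p - 1) = t ^ (q - 1) * t ^ (p - q) := by
    rw [← Real.rpow_add ht]; congr 1; ring
  have e2 : t ^ (γ - 1) = t ^ (q - 1) * t ^ (p - q) * t ^ (γ - p) := by
    rw [← Real.rpow_add ht, ← Real.rpow_add ht]; congr 1; ring
  have hpos : 0 < t ^ (q - 1) := Real.rpow_pos_of_pos ht _
  have key : A / p * (p * t ^ (p - 1)) - lam * B / q * (q * t ^ (q - 1))
        - F / γ * (γ * t ^ (γ - 1))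
      = t ^ (q - 1) * (t ^ (p - q) * (A - F * t ^ (γ - p)) - lam * B) := by
    rw [e1, e2]; field_simp; ring
  rw [hd.deriv, key, mul_eq_zero, sub_eq_zero]
  exact or_iff_right hpos.ne'

lemma Lam_pos {p q γ A B F : ℝ} (hqp : q < p) (hpγ : p < γ) (hA : 0 < A) (hB : 0 < B)
    (hF : 0 < F) : 0 < Lam p q γ A B F := by
  have h1 : 0 < γ - p := by linarith
  have h2 : 0 < γ - q := by linarith
  have h3 : 0 < p - q := by linarith
  unfold Lam
  positivity

/-- The factor `A - F t^(γ-p)` tends to `A` as `t ↓ 0`. -/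
lemma tendsto_factor {p γ A F : ℝ} (hpγ : p < γ) :
    Tendsto (fun t : ℝ => A - F * t ^ (γ - p)) (𝓝 0) (𝓝 A) := by
  have h : Tendsto (fun t : ℝ => t ^ (γ - p)) (𝓝 0) (𝓝 0) := by
    have := (Real.continuous_rpow_const (q := γ - p) (by linarith)).tendsto 0
    rwa [Real.zero_rpow (by linarith)] at this
  simpa using (h.const_mul F).const_sub A

/-- if, for each admissible `λ > 0` (every `λ > 0` when `F ≤ 0`, and
`λ ∈ (0, Λ(A,B,F))` when `F > 0`), `t⁺_λ` is the smallest critical point of `φ_λ` in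
`(0,∞)`, then `t⁺_λ / λ^{1/(p−q)} → (B/A)^{1/(p−q)}` as `λ ↓ 0`. -/
theorem smallest_critical_point_asymptotics (p q γ A B F : ℝ)
    (hq : 1 < q) (hqp : q < p) (hpγ : p < γ)
    (hA : 0 < A) (hB : 0 < B)
    (tplus : ℝ → ℝ)
    (htp : ∀ lam : ℝ, 0 < lam → (0 < F → lam < Lam p q γ A B F) →
      0 < tplus lam ∧ deriv (phi p q γ A B F lam) (tplus lam) = 0 ∧
      ∀ t : ℝ, 0 < t → deriv (phi p q γ A B F lam) t = 0 → tplus lam ≤ t) :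
    Filter.Tendsto (fun lam => tplus lam / lam ^ (1 / (p - q)))
      (𝓝[>] (0 : ℝ)) (𝓝 ((B / A) ^ (1 / (p - q)))) := by
  have ha : 0 < p - q := by linarith
  have hfac := tendsto_factor (A := A) (F := F) hpγ
  have hsmall : ∀ c : ℝ, 0 < c → ∀ᶠ lam in 𝓝[>] (0 : ℝ), lam < c := fun c hc =>
    nhdsWithin_le_nhds (eventually_lt_nhds hc)
  have hadm : ∀ᶠ lam in 𝓝[>] (0 : ℝ), 0 < lam ∧ (0 < F → lam < Lam p q γ A B F) := by
    by_cases hF : 0 < F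
    · filter_upwards [self_mem_nhdsWithin, hsmall _ (Lam_pos hqp hpγ hA hB hF)] with l h1 h2
      exact ⟨h1, fun _ => h2⟩
    · filter_upwards [self_mem_nhdsWithin] with l h1
      exact ⟨h1, fun h => absurd h hF⟩
  have hcont : Continuous (fun t : ℝ => t ^ (p - q) * (A - F * t ^ (γ - p))) :=
    (Real.continuous_rpow_const ha.le).mul
      (continuous_const.sub (continuous_const.mul
        (Real.continuous_rpow_const (by linarith))))
  have ht0 : Tendsto tplus (𝓝[>] (0 : ℝ)) (𝓝 0) := by
    rw [tendsto_order]
    constructor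
    · intro c hc
      filter_upwards [hadm] with l hl
      exact hc.trans (htp l hl.1 hl.2).1
    · intro ε hε
      -- A point `s ∈ (0, ε)` where `G` is positive: `G` then attains every value below `G s`
      -- on `(0, s)`.
      obtain ⟨s, ⟨hsA, hsε⟩, hs0⟩ :=
        ((((hfac.eventually_const_lt hA).filter_mono nhdsWithin_le_nhds).and
          (hsmall ε hε)).and
          (self_mem_nhdsWithin : Ioi (0 : ℝ) ∈ 𝓝[>] (0 : ℝ))).exists
      have hs0 : 0 < s := hs0
      have hG : 0 < s ^ (p - q) * (A - F * s ^ (γ - p)) :=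
        mul_pos (Real.rpow_pos_of_pos hs0 _) hsA
      filter_upwards [hadm, hsmall _ (div_pos hG hB)] with l hl hlG
      rw [lt_div_iff₀ hB] at hlG
      obtain ⟨t, ⟨ht, hts⟩, hGt⟩ :=
        intermediate_value_Ioo hs0.le hcont.continuousOn
          (show l * B ∈ Ioo _ _ from
            ⟨by simpa [Real.zero_rpow ha.ne'] using mul_pos hl.1 hB, hlG⟩)
      have := (htp l hl.1 hl.2).2.2 t ht ((deriv_phi_eq_zero_iff hq hqp hpγ ht).2 hGt)
      linarith
  have hA' := hfac.comp ht0
  have hlim : Tendsto (fun l => (B / (A - F * tplus l ^ (γ - p))) ^ (1 / (p - q)))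
      (𝓝[>] (0 : ℝ)) (𝓝 ((B / A) ^ (1 / (p - q)))) :=
    (tendsto_const_nhds.div hA' hA.ne').rpow_const (Or.inl (div_pos hB hA).ne')
  refine hlim.congr' ?_
  filter_upwards [hadm, hA'.eventually_const_lt hA] with l hl hpos
  obtain ⟨ht, hcrit, -⟩ := htp l hl.1 hl.2
  have hl0 := hl.1
  have hpos : 0 < A - F * tplus l ^ (γ - p) := hpos
  have heq := (deriv_phi_eq_zero_iff hq hqp hpγ ht).1 hcrit
  have h1 : B / (A - F * tplus l ^ (γ - p)) = tplus l ^ (p - q) / l := by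
    rw [div_eq_div_iff hpos.ne' hl0.ne']; linarith
  rw [h1, Real.div_rpow (Real.rpow_nonneg ht.le _) hl0.le, ← Real.rpow_mul ht.le,
    mul_one_div_cancel ha.ne', Real.rpow_one]
end
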